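/- Let (A, τ, S, (A_I), (E_I)) be an A_0-valued white noise and let (b_t)_{t≥0} be a norm-continuous additive cocycle for the shift S which is differentiable at 0 in the C*-norm, i.e. the limit lim_{t→0+} b_t / t exists in A. Then the centred part of b vanishes identically: b_t = t · E_0(b_1) for all t ≥ 0, with E_0(b_1) ∈ A_0; that is, every differentiable additive cocycle is a drift. -/

import Mathlib

open scoped ComplexOrder

/-- A faithful tracial state on a unital C*-algebra. -/
structure IsTracialState {A : Type*} [CStarAlgebra A] (τ : A →ₗ[ℂ] ℂ) : Prop where
  map_one : τ 1 = 1
  pos : ∀ x : A, 0 ≤ τ (star x * x)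
  tracial : ∀ x y : A, τ (x * y) = τ (y * x)
  bounded : ∀ x : A, ‖τ x‖ ≤ ‖x‖
  faithful : ∀ x : A, τ (star x * x) = 0 → x = 0

/-- A (trace-preserving) conditional expectation onto a subset `B` of `A`. -/
structure IsCondExp {A : Type*} [CStarAlgebra A] (τ : A →ₗ[ℂ] ℂ) (B : Set A)
    (E : A →ₗ[ℂ] A) : Prop where
  mem_range : ∀ x, E x ∈ B
  map_of_mem : ∀ b ∈ B, E b = b
  bimodule : ∀ a ∈ B, ∀ c ∈ B, ∀ x, E (a * x * c) = a * E x * c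
  map_star : ∀ x, E (star x) = star (E x)
  contractive : ∀ x, ‖E x‖ ≤ ‖x‖
  trace_eq : ∀ x, τ (E x) = τ x

/-- An `A₀`-valued white noise `(A, τ, S, (A_I), (E_I))`.  The filtration is indexed by
closed intervals `[a, b]` of `ℝ` with (possibly infinite) endpoints `a b : EReal`. -/
structure WhiteNoise (A : Type*) [CStarAlgebra A] (τ : A →ₗ[ℂ] ℂ) where
  tracial : IsTracialState τ
  /-- the filtration algebra `A_{[a,b]}` -/
  alg : EReal → EReal → StarSubalgebra ℂ A
  alg_isClosed : ∀ a b, IsClosed (alg a b : Set A)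
  alg_mono : ∀ a b a' b' : EReal, a' ≤ a → b ≤ b' → (alg a b : Set A) ⊆ alg a' b'
  /-- the distinguished subalgebra `A₀` -/
  A0 : StarSubalgebra ℂ A
  A0_isClosed : IsClosed (A0 : Set A)
  A0_le : ∀ a b, (A0 : Set A) ⊆ alg a b
  /-- the conditional expectation `E_{[a,b]}` onto `A_{[a,b]}` -/
  E : EReal → EReal → (A →ₗ[ℂ] A)
  /-- the conditional expectation `E₀` onto `A₀` -/
  E0 : A →ₗ[ℂ] A
  E_condExp : ∀ a b, IsCondExp τ (alg a b) (E a b)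
  E0_condExp : IsCondExp τ A0 E0
  /-- the white noise shift: a one-parameter group of trace-preserving `*`-automorphisms -/
  S : ℝ → (A ≃⋆ₐ[ℂ] A)
  S_zero : ∀ x, S 0 x = x
  S_add : ∀ s t x, S (s + t) x = S s (S t x)
  S_trace : ∀ t x, τ (S t x) = τ x
  S_alg : ∀ (t : ℝ) (a b : EReal),
    (S t) '' (alg a b : Set A) = (alg (a + (t : EReal)) (b + (t : EReal)) : Set A)
  S_fix : ∀ t, ∀ a ∈ A0, S t a = a
  E0_S : ∀ t x, E0 (S t x) = E0 x
  /-- independence over `A₀`: `E_I ∘ E_J = E₀` whenever the interiors of `I`, `J` are disjoint -/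
  indep : ∀ a b c d : EReal,
    (∀ x : ℝ, ¬((a < (x : EReal) ∧ (x : EReal) < b) ∧ (c < (x : EReal) ∧ (x : EReal) < d))) →
    ∀ y, E a b (E c d y) = E0 y
  /-- the tower property `E₀ ∘ E_I = E₀` -/
  tower : ∀ (a b : EReal) (y : A), E0 (E a b y) = E0 y

/-!
The centred part `c_t = b_t - E₀(b_t)` of an additive cocycle is again one, and by independence its
increments over adjacent intervals are orthogonal for `τ`. Hence `t ↦ ‖c_t‖₂²` is additive. If the
norm of `b_t` is `o(√t)` as `t → 0+`, then `‖c_t‖₂² = o(t)`; an additive function on `[0, ∞)` with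
this property vanishes, so `c = 0` by faithfulness of `τ`. What remains, `t ↦ E₀(b_t)`, is additive
and tends to `0` at `0+`, hence is linear. A differentiable cocycle is `O(t)` and so in particular
`o(√t)`. The rate is sharp: free Brownian motion is a centred additive cocycle with `‖b_t‖ = 2√t`.
-/

open Asymptotics Filter Set Topology

section AdditiveOnNonneg

theorem exists_addMonoidHom_eqOn_Ici {α V : Type*} [AddCommGroup α] [Lattice α] [AddLeftMono α]
    [AddCommGroup V] {g : α → V} (hg : ∀ s t, 0 ≤ s → 0 ≤ t → g (s + t) = g s + g t) :
    ∃ G : α →+ V, EqOn G g (Ici 0) := by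
  have hg0 : g 0 = 0 := by simpa using hg 0 0 le_rfl le_rfl
  refine ⟨AddMonoidHom.mk' (fun x => g x⁺ - g x⁻) fun x y => ?_, fun x (hx : 0 ≤ x) => ?_⟩
  · have hparts : (x + y)⁺ + (x⁻ + y⁻) = x⁺ + y⁺ + (x + y)⁻ := by
      rw [← sub_eq_sub_iff_add_eq_add, add_sub_add_comm]
      simp only [posPart_sub_negPart]
    have hsum := congrArg g hparts
    rw [hg _ _ (posPart_nonneg _) (add_nonneg (negPart_nonneg _) (negPart_nonneg _)),
      hg _ _ (add_nonneg (posPart_nonneg _) (posPart_nonneg _)) (negPart_nonneg _),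
      hg _ _ (negPart_nonneg _) (negPart_nonneg _),
      hg _ _ (posPart_nonneg _) (posPart_nonneg _)] at hsum
    rwa [← add_sub_add_comm, sub_eq_sub_iff_add_eq_add]
  · simp [posPart_eq_self.2 hx, negPart_eq_zero.2 hx, hg0]

theorem continuous_of_tendsto_nhdsGT_zero {V : Type*} [AddCommGroup V] [TopologicalSpace V]
    [IsTopologicalAddGroup V] (G : ℝ →+ V) (hG : Tendsto G (𝓝[>] 0) (𝓝 0)) : Continuous G := by
  have hneg : Tendsto (fun t : ℝ => -t) (𝓝[<] 0) (𝓝[>] 0) := by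
    simpa using tendsto_neg_nhdsLT (a := (0 : ℝ))
  have hG_left : Tendsto G (𝓝[<] 0) (𝓝 0) := by
    simpa [Function.comp_def] using (hG.comp hneg).neg
  refine continuous_of_continuousAt_zero G (continuousAt_iff_continuous_left'_right'.2 ⟨?_, ?_⟩)
  · simpa [ContinuousWithinAt] using hG_left
  · simpa [ContinuousWithinAt] using hG

theorem eq_smul_of_add_of_tendsto_nhdsGT_zero {V : Type*} [AddCommGroup V] [Module ℝ V]
    [TopologicalSpace V] [IsTopologicalAddGroup V] [ContinuousSMul ℝ V] [T2Space V] {g : ℝ → V}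
    (hg : ∀ s t, 0 ≤ s → 0 ≤ t → g (s + t) = g s + g t) (hg0 : Tendsto g (𝓝[>] 0) (𝓝 0))
    {t : ℝ} (ht : 0 ≤ t) : g t = t • g 1 := by
  obtain ⟨G, hGg⟩ := exists_addMonoidHom_eqOn_Ici hg
  have hG : Continuous G := continuous_of_tendsto_nhdsGT_zero G <|
    hg0.congr' (hGg.symm.mono Ioi_subset_Ici_self).eventuallyEq_nhdsWithin
  calc g t = G (t • 1) := by rw [smul_eq_mul, mul_one, hGg ht]
    _ = t • g 1 := by rw [map_real_smul G hG, hGg (mem_Ici.2 zero_le_one)]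

theorem eq_zero_of_add_of_isLittleO {V : Type*} [NormedAddCommGroup V] [NormedSpace ℝ V]
    {g : ℝ → V} (hg : ∀ s t, 0 ≤ s → 0 ≤ t → g (s + t) = g s + g t)
    (hgo : g =o[𝓝[>] 0] fun t => t) {t : ℝ} (ht : 0 ≤ t) : g t = 0 := by
  have hlin {s : ℝ} (hs : 0 ≤ s) : g s = s • g 1 :=
    eq_smul_of_add_of_tendsto_nhdsGT_zero hg
      (hgo.trans_tendsto (tendsto_id'.2 nhdsWithin_le_nhds)) hs
  have hslope : (fun _ : ℝ => g 1) =o[𝓝[>] 0] fun _ => (1 : ℝ) := by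
    refine ((isBigO_refl (fun t : ℝ => t⁻¹) _).smul_isLittleO hgo).congr' ?_ ?_ <;>
      filter_upwards [self_mem_nhdsWithin] with s (hs : 0 < s)
    · rw [hlin hs.le, inv_smul_smul₀ hs.ne']
    · rw [smul_eq_mul, inv_mul_cancel₀ hs.ne']
  rw [hlin ht, isLittleO_const_const_iff.1 hslope, smul_zero]

end AdditiveOnNonneg

section Sqrt

theorem tendsto_sqrt_nhdsGT_zero : Tendsto Real.sqrt (𝓝[>] 0) (𝓝 0) := by
  simpa using (Real.continuous_sqrt.tendsto 0).mono_left nhdsWithin_le_nhds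

theorem sqrt_mul_sqrt_eventuallyEq_nhdsGT_zero :
    (fun t => Real.sqrt t * Real.sqrt t) =ᶠ[𝓝[>] 0] fun t => t := by
  filter_upwards [self_mem_nhdsWithin] with t (ht : 0 < t)
  exact Real.mul_self_sqrt ht.le

theorem isLittleO_id_sqrt_nhdsGT_zero : (fun t : ℝ => t) =o[𝓝[>] 0] Real.sqrt :=
  (((isLittleO_one_iff ℝ).2 tendsto_sqrt_nhdsGT_zero).mul_isBigO
    (isBigO_refl Real.sqrt _)).congr' sqrt_mul_sqrt_eventuallyEq_nhdsGT_zero (by simp)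

theorem isLittleO_sqrt_of_tendsto_inv_smul {V : Type*} [NormedAddCommGroup V] [NormedSpace ℝ V]
    {b : ℝ → V} {d : V} (hd : Tendsto (fun t => t⁻¹ • b t) (𝓝[>] 0) (𝓝 d)) :
    b =o[𝓝[>] 0] Real.sqrt := by
  refine (isLittleO_id_sqrt_nhdsGT_zero.smul_isBigO (hd.isBigO_one ℝ)).congr' ?_ (by simp)
  filter_upwards [self_mem_nhdsWithin] with t (ht : 0 < t)
  exact smul_inv_smul₀ ht.ne' (b t)

end Sqrt

section TracialState

variable {A : Type*} [CStarAlgebra A] {τ : A →ₗ[ℂ] ℂ}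

theorem IsTracialState.isLittleO_apply_star_mul_self (hτ : IsTracialState τ) {α : Type*}
    {l : Filter α} {c : α → A} {f : α → ℝ} (hc : c =o[l] f) :
    (fun t => τ (star (c t) * c t)) =o[l] fun t => f t * f t := by
  have hbound : (fun t => τ (star (c t) * c t)) =O[l] fun t => ‖c t‖ * ‖c t‖ :=
    isBigO_of_le _ fun t => by
      simpa [CStarRing.norm_star_mul_self] using hτ.bounded (star (c t) * c t)
  exact hbound.trans_isLittleO (hc.norm_left.mul hc.norm_left)

namespace IsCondExp

variable {B : Set A} {E : A →ₗ[ℂ] A}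

theorem continuous (hE : IsCondExp τ B E) : Continuous E :=
  AddMonoidHomClass.continuous_of_bound E 1 fun x => by simpa using hE.contractive x

theorem apply_apply (hE : IsCondExp τ B E) (x : A) : E (E x) = E x :=
  hE.map_of_mem _ (hE.mem_range x)

theorem trace_mul_eq_zero (hE : IsCondExp τ B E) (hB : 1 ∈ B) {a x : A} (ha : a ∈ B)
    (hx : E x = 0) : τ (a * x) = 0 := by
  have hax : E (a * x) = 0 := by simpa [hx] using hE.bimodule a ha 1 hB x
  rw [← hE.trace_eq, hax, map_zero]

end IsCondExp

end TracialState

namespace WhiteNoise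

variable {A : Type*} [CStarAlgebra A] {τ : A →ₗ[ℂ] ℂ} (W : WhiteNoise A τ)

theorem S_mem_alg (t : ℝ) {a b : EReal} {x : A} (hx : x ∈ W.alg a b) :
    W.S t x ∈ W.alg (a + t) (b + t) := by
  have hSx : W.S t x ∈ W.S t '' W.alg a b := mem_image_of_mem _ hx
  rwa [W.S_alg] at hSx

theorem E_eq_E0_of_mem_alg {a b c d : EReal} (hbc : b ≤ c) {x : A} (hx : x ∈ W.alg c d) :
    W.E a b x = W.E0 x := by
  rw [← W.indep a b c d, (W.E_condExp c d).map_of_mem x hx]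
  rintro r ⟨⟨-, hrb⟩, hcr, -⟩
  exact (hrb.trans_le hbc).asymm hcr

theorem trace_mul_eq_zero {a b c d : EReal} (hbc : b ≤ c) {x y : A} (hx : x ∈ W.alg a b)
    (hy : y ∈ W.alg c d) (hy0 : W.E0 y = 0) : τ (x * y) = 0 :=
  (W.E_condExp a b).trace_mul_eq_zero (one_mem (W.alg a b)) hx
    ((W.E_eq_E0_of_mem_alg hbc hy).trans hy0)

theorem trace_star_mul_self_add {a b c d : EReal} (hbc : b ≤ c) {x y : A} (hx : x ∈ W.alg a b)
    (hy : y ∈ W.alg c d) (hy0 : W.E0 y = 0) :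
    τ (star (y + x) * (y + x)) = τ (star y * y) + τ (star x * x) := by
  have hxy : τ (star x * y) = 0 := W.trace_mul_eq_zero hbc (star_mem hx) hy hy0
  have hyx : τ (star y * x) = 0 := by
    rw [W.tracial.tracial]
    exact W.trace_mul_eq_zero hbc hx (star_mem hy) (by rw [W.E0_condExp.map_star, hy0, star_zero])
  simp only [star_add, add_mul, mul_add, map_add, hxy, hyx, zero_add, add_zero]

/-- An additive cocycle for the shift of `W`. The family `(b_t)_{t ≥ 0}` is encoded as a function on
all of `ℝ` whose values at negative times are unconstrained. -/
structure IsAdditiveCocycle (b : ℝ → A) : Prop where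
  mem_alg : ∀ t : ℝ, 0 ≤ t → b t ∈ W.alg 0 t
  apply_add : ∀ s t : ℝ, 0 ≤ s → 0 ≤ t → b (s + t) = W.S t (b s) + b t

namespace IsAdditiveCocycle

variable {W} {b c : ℝ → A}

theorem E0_apply_add (hb : W.IsAdditiveCocycle b) (s t : ℝ) (hs : 0 ≤ s) (ht : 0 ≤ t) :
    W.E0 (b (s + t)) = W.E0 (b s) + W.E0 (b t) := by
  rw [hb.apply_add s t hs ht, map_add, W.E0_S]

theorem sub_E0 (hb : W.IsAdditiveCocycle b) : W.IsAdditiveCocycle fun t => b t - W.E0 (b t) where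
  mem_alg t ht := sub_mem (hb.mem_alg t ht) (W.A0_le _ _ (W.E0_condExp.mem_range _))
  apply_add s t hs ht := by
    rw [hb.E0_apply_add s t hs ht, hb.apply_add s t hs ht, map_sub,
      W.S_fix t _ (W.E0_condExp.mem_range _), add_sub_add_comm]

theorem trace_star_mul_self_apply_add (hc : W.IsAdditiveCocycle c)
    (hc0 : ∀ t, 0 ≤ t → W.E0 (c t) = 0) (s t : ℝ) (hs : 0 ≤ s) (ht : 0 ≤ t) :
    τ (star (c (s + t)) * c (s + t)) = τ (star (c s) * c s) + τ (star (c t) * c t) := by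
  have hSc : W.S t (c s) ∈ W.alg t (s + t) := by simpa using W.S_mem_alg t (hc.mem_alg s hs)
  rw [hc.apply_add s t hs ht, W.trace_star_mul_self_add le_rfl (hc.mem_alg t ht) hSc
    (by rw [W.E0_S, hc0 s hs]), ← map_star, ← map_mul, W.S_trace]

theorem eq_zero_of_isLittleO_sqrt (hc : W.IsAdditiveCocycle c) (hc0 : ∀ t, 0 ≤ t → W.E0 (c t) = 0)
    (hco : c =o[𝓝[>] 0] Real.sqrt) {t : ℝ} (ht : 0 ≤ t) : c t = 0 := by
  have hτo : (fun t => τ (star (c t) * c t)) =o[𝓝[>] 0] fun t => t :=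
    (W.tracial.isLittleO_apply_star_mul_self hco).congr' .rfl sqrt_mul_sqrt_eventuallyEq_nhdsGT_zero
  exact W.tracial.faithful _ <|
    eq_zero_of_add_of_isLittleO (hc.trace_star_mul_self_apply_add hc0) hτo ht

theorem eq_E0_of_isLittleO_sqrt (hb : W.IsAdditiveCocycle b) (hbo : b =o[𝓝[>] 0] Real.sqrt)
    {t : ℝ} (ht : 0 ≤ t) : b t = W.E0 (b t) := by
  have hE0b : (fun t => W.E0 (b t)) =O[𝓝[>] 0] b :=
    isBigO_of_le _ fun t => W.E0_condExp.contractive (b t)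
  refine sub_eq_zero.1 (hb.sub_E0.eq_zero_of_isLittleO_sqrt (fun s _ => ?_)
    (hbo.sub (hE0b.trans_isLittleO hbo)) ht)
  rw [map_sub, W.E0_condExp.apply_apply, sub_self]

theorem E0_eq_smul_of_tendsto (hb : W.IsAdditiveCocycle b) (hb0 : Tendsto b (𝓝[>] 0) (𝓝 0))
    {t : ℝ} (ht : 0 ≤ t) : W.E0 (b t) = t • W.E0 (b 1) :=
  eq_smul_of_add_of_tendsto_nhdsGT_zero hb.E0_apply_add
    (by simpa using (W.E0_condExp.continuous.tendsto 0).comp hb0) ht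

end IsAdditiveCocycle

end WhiteNoise

theorem differentiable_additive_cocycle_is_drift_general {A : Type*} [CStarAlgebra A]
    {τ : A →ₗ[ℂ] ℂ} {W : WhiteNoise A τ} {b : ℝ → A} (hb : W.IsAdditiveCocycle b)
    (hbo : b =o[𝓝[>] 0] Real.sqrt) :
    W.E0 (b 1) ∈ W.A0 ∧ ∀ t : ℝ, 0 ≤ t → b t = (t : ℂ) • W.E0 (b 1) := by
  refine ⟨W.E0_condExp.mem_range _, fun t ht => ?_⟩
  calc b t = W.E0 (b t) := hb.eq_E0_of_isLittleO_sqrt hbo ht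
    _ = t • W.E0 (b 1) := hb.E0_eq_smul_of_tendsto (hbo.trans_tendsto tendsto_sqrt_nhdsGT_zero) ht
    _ = (t : ℂ) • W.E0 (b 1) := (Complex.coe_smul t _).symm

/-- Every additive cocycle which is differentiable at `0` in norm is a drift:
its centred part vanishes and `b_t = t • E₀(b_1)` with `E₀(b_1) ∈ A₀`. -/
theorem differentiable_additive_cocycle_is_drift {A : Type*} [CStarAlgebra A]
    (τ : A →ₗ[ℂ] ℂ) (W : WhiteNoise A τ) (b : ℝ → A)
    (hadapt : ∀ t : ℝ, 0 ≤ t → b t ∈ W.alg 0 (t : EReal))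
    (hcoc : ∀ s t : ℝ, 0 ≤ s → 0 ≤ t → b (s + t) = W.S t (b s) + b t)
    (hcont : ContinuousOn b (Set.Ici 0))
    (d' : A)
    (hdiff : Filter.Tendsto (fun t : ℝ => ((t : ℂ))⁻¹ • b t)
      (nhdsWithin 0 (Set.Ioi 0)) (nhds d')) :
    W.E0 (b 1) ∈ W.A0 ∧ ∀ t : ℝ, 0 ≤ t → b t = (t : ℂ) • W.E0 (b 1) := by
  exact differentiable_additive_cocycle_is_drift_general ⟨hadapt, hcoc⟩ <|
    isLittleO_sqrt_of_tendsto_inv_smul (by simpa [← Complex.ofReal_inv] using hdiff)
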